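/- arXiv:1109.5472 — 2 statements merged into one kernel-verified Lean document; each statement's English description precedes it below -/
import Mathlib

section
/- Let A be a 2×2 complex matrix. Then ∫_{U(2)} (u A u*)_{11} (u A u*)_{22} du = ((trace A)² + 2 det A)/6 and ∫_{U(2)} (u A u*)_{12} (u A u*)_{21} du = ((trace A)² − 4 det A)/6, where the integrals are over the unitary group U(2) with respect to its Haar probability measure. (Example 2 of Section 8.) -/
open MeasureTheory Matrix
open scoped ComplexOrder

noncomputable instance {n : ℕ} : MeasurableSpace (Matrix.unitaryGroup (Fin n) ℂ) := borel _
instance {n : ℕ} : BorelSpace (Matrix.unitaryGroup (Fin n) ℂ) := ⟨rfl⟩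

/-- conjugation of `A` by the unitary `u` : `u * A * u*` -/
noncomputable def conjU {n : ℕ} (A : Matrix (Fin n) (Fin n) ℂ) (u : Matrix.unitaryGroup (Fin n) ℂ) :
    Matrix (Fin n) (Fin n) ℂ :=
  (u : Matrix (Fin n) (Fin n) ℂ) * A * star (u : Matrix (Fin n) (Fin n) ℂ)

lemma stmt11_unit (s w : ℂ) (hs : s * star s = 1 / 2) (hw : w * star w = 1) :
    !![s, s * w; s, -(s * w)] ∈ Matrix.unitaryGroup (Fin 2) ℂ := by
  rw [Matrix.mem_unitaryGroup_iff]
  simp only [Complex.star_def] at hs hw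
  ext i j
  fin_cases i <;> fin_cases j <;>
    simp [Matrix.mul_apply, Fin.sum_univ_two, Matrix.star_apply] <;> grind

lemma stmt11_cont {n : ℕ} (A : Matrix (Fin n) (Fin n) ℂ) (i j : Fin n) :
    Continuous fun u => conjU A u i j := by
  unfold conjU
  have h : Continuous fun u : Matrix.unitaryGroup (Fin n) ℂ => (u : Matrix (Fin n) (Fin n) ℂ) :=
    continuous_subtype_val
  exact ((h.mul continuous_const).mul h.star).matrix_elem i j

lemma stmt11_bdd {n : ℕ} (A : Matrix (Fin n) (Fin n) ℂ) (i j : Fin n)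
    (u : Matrix.unitaryGroup (Fin n) ℂ) :
    ‖conjU A u i j‖ ≤ ∑ l, ∑ k, ‖A k l‖ := by
  simp only [conjU, Matrix.mul_apply, Matrix.star_apply, Finset.sum_mul]
  refine (norm_sum_le _ _).trans (Finset.sum_le_sum fun l _ => ?_)
  refine (norm_sum_le _ _).trans (Finset.sum_le_sum fun k _ => ?_)
  rw [norm_mul, norm_mul, norm_star]
  have h1 := entry_norm_bound_of_unitary u.2 i k
  have h2 := entry_norm_bound_of_unitary u.2 j l
  calc _ ≤ 1 * ‖A k l‖ * 1 := by gcongr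
    _ = _ := by ring

lemma stmt11_mul {n : ℕ} (A : Matrix (Fin n) (Fin n) ℂ) (g u : Matrix.unitaryGroup (Fin n) ℂ) :
    conjU A (g * u) = (g : Matrix (Fin n) (Fin n) ℂ) * conjU A u *
      star (g : Matrix (Fin n) (Fin n) ℂ) := by
  simp [conjU, mul_assoc]

theorem stmt11 (μ : Measure (Matrix.unitaryGroup (Fin 2) ℂ))
    [μ.IsMulLeftInvariant] [IsProbabilityMeasure μ]
    (A : Matrix (Fin 2) (Fin 2) ℂ) :
    (∫ u, (conjU A u) 0 0 * (conjU A u) 1 1 ∂μ = (A.trace ^ 2 + 2 * A.det) / 6) ∧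
      (∫ u, (conjU A u) 0 1 * (conjU A u) 1 0 ∂μ = (A.trace ^ 2 - 4 * A.det) / 6) := by
  have hint : ∀ i j k l : Fin 2, Integrable (fun u => conjU A u i j * conjU A u k l) μ := by
    intro i j k l
    refine Integrable.of_bound
      ((stmt11_cont A i j).mul (stmt11_cont A k l)).measurable.aestronglyMeasurable
      ((∑ l, ∑ k, ‖A k l‖) * (∑ l, ∑ k, ‖A k l‖)) (Filter.Eventually.of_forall fun u => ?_)
    rw [norm_mul]
    exact mul_le_mul (stmt11_bdd A i j u) (stmt11_bdd A k l u) (norm_nonneg _)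
      ((norm_nonneg _).trans (stmt11_bdd A i j u))
  have htr : ∀ u, conjU A u 0 0 + conjU A u 1 1 = A.trace := by
    intro u
    rw [← Matrix.trace_fin_two, conjU, Matrix.trace_mul_comm, ← mul_assoc,
      Matrix.UnitaryGroup.star_mul_self, one_mul]
  have hdet : ∀ u, conjU A u 0 0 * conjU A u 1 1 - conjU A u 0 1 * conjU A u 1 0 = A.det := by
    intro u
    rw [← Matrix.det_fin_two, conjU, Matrix.det_mul_comm, ← mul_assoc,
      Matrix.UnitaryGroup.star_mul_self, one_mul]
  obtain ⟨s, hs⟩ : ∃ s : ℂ, s * star s = 1 / 2 := by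
    refine ⟨((√(1/2) : ℝ) : ℂ), ?_⟩
    rw [Complex.star_def, Complex.conj_ofReal, ← Complex.ofReal_mul,
      Real.mul_self_sqrt (by norm_num)]
    norm_num
  let g₁ : Matrix.unitaryGroup (Fin 2) ℂ := ⟨_, stmt11_unit s 1 hs (by simp)⟩
  let g₂ : Matrix.unitaryGroup (Fin 2) ℂ := ⟨_, stmt11_unit s Complex.I hs (by simp)⟩
  set f : Matrix.unitaryGroup (Fin 2) ℂ → ℂ := fun u => conjU A u 0 0 * conjU A u 1 1 with hf
  have key : ∀ u, f (g₁ * u) + f (g₂ * u) = A.trace ^ 2 / 2 + A.det - f u := by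
    intro u
    have h1 := htr u
    have h2 := hdet u
    have hI := Complex.I_mul_I
    have hs' : s * (starRingEnd ℂ) s = 1 / 2 := hs
    simp only [hf, stmt11_mul, g₁, g₂]
    generalize conjU A u = B at *
    simp [Matrix.mul_apply, Fin.sum_univ_two, Matrix.star_apply, Matrix.vecMul, dotProduct]
    rw [← h1, ← h2]
    clear_value g₁ g₂
    clear hs
    generalize (starRingEnd ℂ) s = t at *
    grind
  have hfi : Integrable f μ := hint 0 0 1 1
  have e1 := integral_mul_left_eq_self (μ := μ) f g₁
  have e2 := integral_mul_left_eq_self (μ := μ) f g₂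
  have i1 : Integrable (fun u => f (g₁ * u)) μ := hfi.comp_mul_left g₁
  have i2 : Integrable (fun u => f (g₂ * u)) μ := hfi.comp_mul_left g₂
  have e3 : ∫ u, (f (g₁ * u) + f (g₂ * u)) ∂μ = ∫ u, (A.trace ^ 2 / 2 + A.det - f u) ∂μ := by
    simp only [key]
  rw [integral_add i1 i2, e1, e2, integral_sub (integrable_const _) hfi] at e3
  have e4 : ∫ u, conjU A u 0 1 * conjU A u 1 0 ∂μ = ∫ u, (f u - A.det) ∂μ := by
    congr 1
    ext u
    rw [← hdet u]
    simp [hf]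
  rw [integral_sub hfi (integrable_const _)] at e4
  simp only [integral_const, probReal_univ, one_smul] at e3 e4
  rw [e4]
  constructor <;> grind
end

section
/- Let n ≥ 1, let 1 ≤ m ≤ n, and let A be an n×n complex matrix. Then there exist complex coefficients a(σ), indexed by permutations σ of {1,…,m}, such that for all functions f, g : {1,…,m} → {1,…,n}: ∫_{U(n)} ∏_{k=1}^m (u A u*)_{f(k), g(k)} du = Σ_{σ ∈ S_m} a(σ) · [f = g ∘ σ], where [f = g ∘ σ] is 1 if f = g ∘ σ and 0 otherwise. (The averaged tensor power operator E^m_A lies in the image of the group algebra ℂS_m acting on ⊗^m ℂ^n; from the proof of Theorem 9.) -/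
open MeasureTheory Matrix
open scoped ComplexOrder

/-- The `m`-th tensor power of a matrix. -/
noncomputable def tens {n : ℕ} (m : ℕ) (M : Matrix (Fin n) (Fin n) ℂ) :
    Matrix (Fin m → Fin n) (Fin m → Fin n) ℂ :=
  Matrix.of fun f g => ∏ k, M (f k) (g k)

lemma tens_apply {n m : ℕ} (M : Matrix (Fin n) (Fin n) ℂ) (f g : Fin m → Fin n) :
    tens m M f g = ∏ k, M (f k) (g k) := rfl

lemma tens_mul {n m : ℕ} (M N : Matrix (Fin n) (Fin n) ℂ) :
    tens m (M * N) = tens m M * tens m N := by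
  ext f g
  simp only [tens_apply, Matrix.mul_apply]
  rw [Finset.prod_univ_sum]
  simp [Finset.prod_mul_distrib]

lemma tens_one {n m : ℕ} : tens m (1 : Matrix (Fin n) (Fin n) ℂ) = 1 := by
  ext f g
  simp only [tens_apply, Matrix.one_apply, Finset.prod_ite_zero, Finset.mem_univ, true_imp_iff,
    Finset.prod_const_one, funext_iff]

lemma tens_diagonal {n m : ℕ} (d : Fin n → ℂ) :
    tens m (Matrix.diagonal d) = Matrix.diagonal fun f => ∏ k, d (f k) := by
  ext f g
  simp only [tens_apply, Matrix.diagonal_apply, Finset.prod_ite_zero, Finset.mem_univ,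
    true_imp_iff, funext_iff]

lemma circle_infinite : (Metric.sphere (0 : ℂ) 1).Infinite := by
  apply IsPreconnected.infinite_of_nontrivial
  · apply isPreconnected_sphere
    rw [Complex.rank_real_complex]
    norm_num
  · exact ⟨1, by simp, -1, by simp, by norm_num⟩

lemma comm_diagonal {n m : ℕ} {T : Matrix (Fin m → Fin n) (Fin m → Fin n) ℂ}
    (hT : ∀ v : Matrix.unitaryGroup (Fin n) ℂ, tens m (v : Matrix (Fin n) (Fin n) ℂ) * T
      = T * tens m (v : Matrix (Fin n) (Fin n) ℂ))
    (d : Fin n → ℂ) :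
    tens m (Matrix.diagonal d) * T = T * tens m (Matrix.diagonal d) := by
  ext f g
  rw [tens_diagonal, Matrix.diagonal_mul, Matrix.mul_diagonal]
  have key : (∏ k, MvPolynomial.X (f k)) * MvPolynomial.C (T f g) =
      MvPolynomial.C (T f g) * (∏ k, MvPolynomial.X (g k) : MvPolynomial (Fin n) ℂ) := by
    apply MvPolynomial.funext_set (fun _ => Metric.sphere (0 : ℂ) 1) (fun _ => circle_infinite)
    intro x hx
    have hx' : ∀ i, ‖x i‖ = 1 := fun i => by simpa using hx i (Set.mem_univ i)
    have hu : Matrix.diagonal x ∈ Matrix.unitaryGroup (Fin n) ℂ := by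
      rw [Matrix.mem_unitaryGroup_iff, Matrix.star_eq_conjTranspose,
        Matrix.diagonal_conjTranspose, Matrix.diagonal_mul_diagonal, ← Matrix.diagonal_one]
      congr 1
      ext i
      simp [Complex.mul_conj, Complex.normSq_eq_norm_sq, hx' i]
    have := congrFun (congrFun (hT ⟨_, hu⟩) f) g
    simp only [tens_diagonal] at this
    rw [Matrix.diagonal_mul, Matrix.mul_diagonal] at this
    simpa [map_prod] using this
  simpa [map_prod] using congrArg (MvPolynomial.eval d) key

lemma comm_hermitian {n m : ℕ} {T : Matrix (Fin m → Fin n) (Fin m → Fin n) ℂ}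
    (hT : ∀ v : Matrix.unitaryGroup (Fin n) ℂ, tens m (v : Matrix (Fin n) (Fin n) ℂ) * T
      = T * tens m (v : Matrix (Fin n) (Fin n) ℂ))
    (H : Matrix (Fin n) (Fin n) ℂ) (hH : H.IsHermitian) :
    tens m H * T = T * tens m H := by
  rw [hH.spectral_theorem, Unitary.conjStarAlgAut_apply, tens_mul, tens_mul]
  have h1 := hT hH.eigenvectorUnitary
  have h2 := comm_diagonal hT (RCLike.ofReal ∘ hH.eigenvalues)
  have h3 := hT (star hH.eigenvectorUnitary)
  rw [Unitary.coe_star] at h3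
  rw [Matrix.mul_assoc, h3, ← Matrix.mul_assoc, Matrix.mul_assoc _ _ T, h2, ← Matrix.mul_assoc,
    h1]
  simp only [Matrix.mul_assoc]

lemma comm_all {n m : ℕ} {T : Matrix (Fin m → Fin n) (Fin m → Fin n) ℂ}
    (hT : ∀ v : Matrix.unitaryGroup (Fin n) ℂ, tens m (v : Matrix (Fin n) (Fin n) ℂ) * T
      = T * tens m (v : Matrix (Fin n) (Fin n) ℂ))
    (M : Matrix (Fin n) (Fin n) ℂ) :
    tens m M * T = T * tens m M := by
  set P : Matrix (Fin n) (Fin n) ℂ := (realPart M : Matrix (Fin n) (Fin n) ℂ) with hP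
  set Q : Matrix (Fin n) (Fin n) ℂ := (imaginaryPart M : Matrix (Fin n) (Fin n) ℂ) with hQ
  have hM : M = P + Complex.I • Q := (realPart_add_I_smul_imaginaryPart M).symm
  have hPh : P.IsHermitian := (realPart M).2
  have hQh : Q.IsHermitian := (imaginaryPart M).2
  ext f g
  have key : (∑ h, (∏ k, (Polynomial.C (P (f k) (h k)) + Polynomial.X * Polynomial.C (Q (f k) (h k))))
        * Polynomial.C (T h g)) =
      ∑ h, Polynomial.C (T f h) *
        (∏ k, (Polynomial.C (P (h k) (g k)) + Polynomial.X * Polynomial.C (Q (h k) (g k)))) := by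
    apply Polynomial.eq_of_infinite_eval_eq
    refine (Set.infinite_range_of_injective Complex.ofReal_injective).mono ?_
    rintro _ ⟨t, rfl⟩
    have hh : (P + (t : ℂ) • Q).IsHermitian := by
      refine hPh.add ?_
      rw [Matrix.IsHermitian, Matrix.conjTranspose_smul, hQh.eq]
      simp
    have := congrFun (congrFun (comm_hermitian hT _ hh) f) g
    simpa [Matrix.mul_apply, tens_apply, Polynomial.eval_finsetSum, Polynomial.eval_prod, mul_comm (t : ℂ)] using this
  have := congrArg (Polynomial.eval Complex.I) key
  rw [hM]
  simpa [Matrix.mul_apply, tens_apply, Polynomial.eval_finsetSum, Polynomial.eval_prod, mul_comm Complex.I] using this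

lemma exists_coeff {n m : ℕ} {T : Matrix (Fin m → Fin n) (Fin m → Fin n) ℂ}
    (hT : ∀ v : Matrix.unitaryGroup (Fin n) ℂ, tens m (v : Matrix (Fin n) (Fin n) ℂ) * T
      = T * tens m (v : Matrix (Fin n) (Fin n) ℂ))
    (hmn : m ≤ n) :
    ∃ a : Equiv.Perm (Fin m) → ℂ, ∀ f g : Fin m → Fin n,
      T f g = ∑ σ : Equiv.Perm (Fin m), a σ * (if f = g ∘ σ then 1 else 0) := by
  set ι : Fin m → Fin n := Fin.castLE hmn with hι
  have hinj : Function.Injective ι := Fin.castLE_injective hmn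
  have hsupp : ∀ h : Fin m → Fin n, (∀ σ : Equiv.Perm (Fin m), h ≠ ι ∘ σ) → T h ι = 0 := by
    intro h hh
    have : ∃ k, ∀ l, h l ≠ ι k := by
      by_contra hcon
      push Not at hcon
      choose s hs using hcon
      have hsi : Function.Injective s := fun a b hab => hinj (by rw [← hs, ← hs, hab])
      let e := Equiv.ofBijective s (Finite.injective_iff_bijective.mp hsi)
      apply hh e.symm
      ext1 k
      have := hs (e.symm k)
      rw [Function.comp, ← this]
      congr 1
      exact (e.apply_symm_apply k).symm
    obtain ⟨k, hk⟩ := this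
    have := congrFun (congrFun (comm_all hT
      (Matrix.diagonal fun i => if i = ι k then 0 else 1)) h) ι
    rw [tens_diagonal, Matrix.diagonal_mul, Matrix.mul_diagonal,
      Finset.prod_eq_one (fun l _ => by simp [hk l]),
      Finset.prod_eq_zero (Finset.mem_univ k) (by simp)] at this
    simpa using this
  refine ⟨fun σ => T (ι ∘ σ) ι, fun f g => ?_⟩
  let M : Matrix (Fin n) (Fin n) ℂ := Matrix.of fun i j =>
    if h : j.val < m then (if i = g ⟨j, h⟩ then 1 else 0) else 0
  have hM : ∀ i k, M i (ι k) = if i = g k then 1 else 0 := by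
    intro i k
    simp [M, ι]
  have ht : ∀ (h : Fin m → Fin n) (σ : Fin m → Fin m),
      tens m M h (ι ∘ σ) = if h = g ∘ σ then 1 else 0 := by
    intro h σ
    simp only [tens_apply, Function.comp, hM, Finset.prod_ite_zero, Finset.mem_univ,
      true_imp_iff, Finset.prod_const_one, funext_iff]
  have := congrFun (congrFun (comm_all hT M) f) ι
  rw [Matrix.mul_apply, Matrix.mul_apply] at this
  have h2 : ∑ j, T f j * tens m M j ι = T f g := by
    have := fun j => ht j id
    simp only [Function.comp_id] at this
    simp [this]
  rw [← h2, ← this]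
  symm
  apply Fintype.sum_of_injective (fun σ : Equiv.Perm (Fin m) => ι ∘ σ)
  · intro σ τ h
    ext1 k
    exact hinj (congrFun h k)
  · intro h hh
    rw [hsupp h (fun σ e => hh ⟨σ, e.symm⟩), mul_zero]
  · intro σ
    rw [ht, mul_comm]

lemma continuous_conjU {n : ℕ} (A : Matrix (Fin n) (Fin n) ℂ) : Continuous (conjU A) := by
  unfold conjU
  fun_prop

lemma norm_conjU_le {n : ℕ} (A : Matrix (Fin n) (Fin n) ℂ) (u : Matrix.unitaryGroup (Fin n) ℂ)
    (i j : Fin n) : ‖conjU A u i j‖ ≤ ∑ l, ∑ k, ‖A k l‖ := by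
  unfold conjU
  rw [Matrix.mul_apply]
  refine (norm_sum_le _ _).trans (Finset.sum_le_sum fun l _ => ?_)
  rw [norm_mul, Matrix.mul_apply]
  have h1 : ‖(star (u : Matrix (Fin n) (Fin n) ℂ)) l j‖ ≤ 1 := by
    rw [Matrix.star_apply, norm_star]
    exact entry_norm_bound_of_unitary u.2 _ _
  refine (mul_le_of_le_one_right (norm_nonneg _) h1).trans ?_
  refine (norm_sum_le _ _).trans (Finset.sum_le_sum fun k _ => ?_)
  rw [norm_mul]
  exact mul_le_of_le_one_left (norm_nonneg _) (entry_norm_bound_of_unitary u.2 _ _)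

lemma integrable_tens {n m : ℕ} (μ : Measure (Matrix.unitaryGroup (Fin n) ℂ))
    [IsProbabilityMeasure μ] (A : Matrix (Fin n) (Fin n) ℂ) (f g : Fin m → Fin n) :
    Integrable (fun u => tens m (conjU A u) f g) μ := by
  have hc : Continuous (fun u => tens m (conjU A u) f g) := by
    simp only [tens_apply]
    exact continuous_finsetProd _ fun k _ => (continuous_conjU A).matrix_elem _ _
  refine Integrable.of_bound hc.aestronglyMeasurable ((∑ l, ∑ k, ‖A k l‖) ^ m)
    (Filter.Eventually.of_forall fun u => ?_)
  rw [tens_apply, norm_prod]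
  refine (Finset.prod_le_prod (fun _ _ => norm_nonneg _)
    (fun k _ => norm_conjU_le A u (f k) (g k))).trans ?_
  simp

theorem stmt14 (n m : ℕ) (hm1 : 1 ≤ m) (hmn : m ≤ n)
    (μ : Measure (Matrix.unitaryGroup (Fin n) ℂ))
    [μ.IsMulLeftInvariant] [IsProbabilityMeasure μ]
    (A : Matrix (Fin n) (Fin n) ℂ) :
    ∃ a : Equiv.Perm (Fin m) → ℂ, ∀ f g : Fin m → Fin n,
      ∫ u, ∏ k, (conjU A u) (f k) (g k) ∂μ =
        ∑ σ : Equiv.Perm (Fin m), a σ * (if f = g ∘ σ then 1 else 0) := by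
  let T : Matrix (Fin m → Fin n) (Fin m → Fin n) ℂ :=
    Matrix.of fun f g => ∫ u, tens m (conjU A u) f g ∂μ
  refine exists_coeff (T := T) ?_ hmn
  intro v
  have hconj : T = tens m (v : Matrix (Fin n) (Fin n) ℂ) * T *
      tens m (star (v : Matrix (Fin n) (Fin n) ℂ)) := by
    ext f g
    have h1 : T f g = ∫ u, tens m (conjU A (v * u)) f g ∂μ :=
      (integral_mul_left_eq_self (fun u => tens m (conjU A u) f g) v).symm
    have h2 : ∀ u, tens m (conjU A (v * u)) = tens m (v : Matrix (Fin n) (Fin n) ℂ) *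
        tens m (conjU A u) * tens m (star (v : Matrix (Fin n) (Fin n) ℂ)) := by
      intro u
      rw [← tens_mul, ← tens_mul]
      congr 1
      simp [conjU, Matrix.mul_assoc]
    rw [h1]
    simp only [h2, Matrix.mul_apply]
    rw [integral_finsetSum]
    · refine Finset.sum_congr rfl fun h _ => ?_
      rw [integral_mul_const, integral_finsetSum]
      · simp only [integral_const_mul]
        rfl
      · intro i _
        exact (integrable_tens μ A _ _).const_mul _
    · intro i _
      exact (integrable_finsetSum _ fun j _ => (integrable_tens μ A _ _).const_mul _).mul_const _
  have hvv : star (v : Matrix (Fin n) (Fin n) ℂ) * (v : Matrix (Fin n) (Fin n) ℂ) = 1 :=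
    Matrix.mem_unitaryGroup_iff'.mp v.2
  conv_rhs => rw [hconj, Matrix.mul_assoc, ← tens_mul, hvv, tens_one, Matrix.mul_one]
end
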